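/- Let Q be a quiver and P the path algebra of its double Q̄ over k. The k-linear map η_rt : P → T_rt(Φ_rt) defined on paths by η_rt(a₁⋯aₙ) = Σ_{cuts H of a₁⋯aₙ} ε_H (T_H, s_H) is an injective homomorphism of pre-Lie coalgebras from (P, δ_{p,rt}) to (T_rt(Φ_rt), ρ). -/

import Mathlib

/-!
Statement 10: for a quiver `Q`, the map
`η_rt(a₁⋯aₙ) = Σ_{cuts H} ε_H (T_H, s_H)` (where `(T_H, s_H)` is the dual decorated
rooted tree of the chord diagram of the cut `H`) is an injective homomorphism of pre-Lie
coalgebras from `(P, δ_{p,rt})` to `(T_rt(Φ_rt), ρ)`.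
-/

open TensorProduct

noncomputable section

section PreLie

variable (k : Type*) [CommRing k] (g : Type*) [AddCommGroup g] [Module k g]

/-- `τ_{(12)}` on the triple tensor product `g ⊗ (g ⊗ g)`: `x⊗y⊗z ↦ y⊗x⊗z`. -/
def tau12 : g ⊗[k] (g ⊗[k] g) →ₗ[k] g ⊗[k] (g ⊗[k] g) :=
  (TensorProduct.assoc k g g g).toLinearMap ∘ₗ
    (LinearMap.rTensor g (TensorProduct.comm k g g).toLinearMap) ∘ₗ
    (TensorProduct.assoc k g g g).symm.toLinearMap

variable {k g}

/-- `δ₀ : g → g ⊗ g` is a (left) pre-Lie comultiplication if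
`(Id − τ_{(12)}) ∘ (δ₀ ⊗ Id − Id ⊗ δ₀) ∘ δ₀ = 0`. -/
def IsPreLieComul (δ : g →ₗ[k] g ⊗[k] g) : Prop :=
  (LinearMap.id - tau12 k g) ∘ₗ
      (((TensorProduct.assoc k g g g).toLinearMap ∘ₗ LinearMap.rTensor g δ)
        - LinearMap.lTensor g δ) ∘ₗ δ = 0

end PreLie

/-! ### Quivers, double quivers and paths

A quiver `Q` is given by a vertex type `I`, an arrow type `E`, and source/target maps
`s t : E → I`. -/

/-- The arrows of the double quiver `Q̄ = Q ⊔ Q*`: `.inl e = e` and `.inr e = e*`. -/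
abbrev Arr (E : Type*) := E ⊕ E

/-- The involution `a ↦ a*` on arrows of the double quiver (with `(e*)* = e`). -/
def astar {E : Type*} : Arr E → Arr E
  | .inl e => .inr e
  | .inr e => .inl e

/-- The source `a_s` of an arrow of the double quiver. -/
def asrc {I E : Type*} (s t : E → I) : Arr E → I
  | .inl e => s e
  | .inr e => t e

/-- The target `a_t` of an arrow of the double quiver. -/
def atgt {I E : Type*} (s t : E → I) : Arr E → I
  | .inl e => t e
  | .inr e => s e

open scoped Classical in
/-- The pairing `ω`: `ω(e,e*) = 1`, `ω(e*,e) = −1` for `e ∈ Q`, and `ω(a,b) = 0`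
whenever `b ≠ a*`. -/
def omg (k : Type*) [CommRing k] {E : Type*} : Arr E → Arr E → k
  | .inl e, .inr e' => if e = e' then 1 else 0
  | .inr e, .inl e' => if e = e' then -1 else 0
  | _, _ => 0

/-- `IsPathFrom s t v l`: `l` is a composable sequence of arrows starting at `v`. -/
def IsPathFrom {I E : Type*} (s t : E → I) : I → List (Arr E) → Prop
  | _, [] => True
  | v, a :: l => asrc s t a = v ∧ IsPathFrom s t (atgt s t a) l

/-- The target of a path. -/
def pathTgt {I E : Type*} (s t : E → I) : I → List (Arr E) → I
  | v, [] => v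
  | _, a :: l => pathTgt s t (atgt s t a) l

/-- A path in the double quiver `Q̄`. -/
structure QPath {I E : Type*} (s t : E → I) : Type _ where
  src : I
  arrows : List (Arr E)
  valid : IsPathFrom s t src arrows

/-! ### Cuts of paths -/

/-- A cut of a path with arrow list `l` (0-indexed): a set `H` of pairs `(i,j)` of
positions such that all the involved positions are distinct, `i < j` for each pair, the
pairs do not cross, and for each pair `{a_i, a_j} = {e, e*}` for some arrow `e ∈ Q`. -/
def IsCut {E : Type*} (l : List (Arr E)) (H : Finset (ℕ × ℕ)) : Prop :=
  (∀ c ∈ H, c.1 < c.2 ∧ c.2 < l.length ∧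
    ∃ e : E, (l[c.1]? = some (.inl e) ∧ l[c.2]? = some (.inr e)) ∨
             (l[c.1]? = some (.inr e) ∧ l[c.2]? = some (.inl e))) ∧
  (∀ c ∈ H, ∀ c' ∈ H, c ≠ c' →
    c.1 ≠ c'.1 ∧ c.1 ≠ c'.2 ∧ c.2 ≠ c'.1 ∧ c.2 ≠ c'.2) ∧
  ¬ ∃ c ∈ H, ∃ c' ∈ H, c.1 < c'.1 ∧ c'.1 < c.2 ∧ c.2 < c'.2

/-- No pair of a cut is nested inside another: together with `IsCut` this defines
simple cuts of paths. -/
def NoNest (H : Finset (ℕ × ℕ)) : Prop :=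
  ¬ ∃ c ∈ H, ∃ c' ∈ H, c.1 < c'.1 ∧ c'.2 < c.2

/-- A simple cut of a path: a cut in which no pair is nested inside another. -/
def IsSimpleCut {E : Type*} (l : List (Arr E)) (H : Finset (ℕ × ℕ)) : Prop :=
  IsCut l H ∧ NoNest H

/-- The sign `ε` contributed by one pair of a cut: `−ω(a_i, a_j)`. -/
def epsFactor (k : Type*) [CommRing k] {E : Type*} (l : List (Arr E)) (c : ℕ × ℕ) : k :=
  match l[c.1]?, l[c.2]? with
  | some a, some b => -(omg k a b)
  | _, _ => 0

/-- The sign `ε_H = ∏_ℓ (−ω(a_{i_ℓ}, a_{j_ℓ}))` of a cut. -/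
def epsH (k : Type*) [CommRing k] {E : Type*} (l : List (Arr E)) (H : Finset (ℕ × ℕ)) :
    k := ∏ c ∈ H, epsFactor k l c

/-- The chords of `H` lying strictly inside the chord `(i,j)`, reindexed along the path
`a_{i+1} ⋯ a_{j−1}`. -/
def insideCut (H : Finset (ℕ × ℕ)) (i j : ℕ) : Finset (ℕ × ℕ) :=
  (H.filter (fun c' => i < c'.1 ∧ c'.2 < j)).image
    (fun c' => (c'.1 - (i+1), c'.2 - (i+1)))

/-- The chords of `H` other than `(i,j)` not lying inside the chord `(i,j)`, reindexed
along the path `a₁ ⋯ a_{i−1} a_{j+1} ⋯ a_n`. -/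
def outsideCut (H : Finset (ℕ × ℕ)) (i j : ℕ) : Finset (ℕ × ℕ) :=
  ((H.erase (i, j)).filter (fun c' => ¬ (i < c'.1 ∧ c'.2 < j))).image
    (fun c' => (if j < c'.1 then c'.1 - (j - i + 1) else c'.1,
                if j < c'.2 then c'.2 - (j - i + 1) else c'.2))

/-! ### Decorated rooted trees: the rooted tree-structure `Φ_rt`

`Φ_rt` attaches to a rooted tree a ribbon graph structure with a corner at the root, an
orientation of every edge, and a labeling of every vertex by a path in `Q̄`.  A rooted
tree equipped with a ribbon structure and a corner at the root is the same thing as a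
planar rooted tree (a linear order on the children of every vertex), so a pair `(T,s)`
with `s ∈ Φ_rt(T)`, taken up to isomorphism, is faithfully represented by the following
inductive type: each vertex carries its label (a path) and the ordered list of its
children, each child edge carrying its orientation flag (`true` = oriented from parent
to child).  Isomorphic pairs have equal representations, so `T_rt(Φ_rt)` is the free
module on `DTree`. -/

/-- Rooted trees decorated by the tree-structure `Φ_rt`. -/
inductive DTree {I E : Type*} (s t : E → I) : Type _
  | node : QPath s t → List (Bool × DTree s t) → DTree s t

section DTreeOps

variable {I E : Type*} {s t : E → I}

mutual
/-- All one-edge cuts of a decorated rooted tree: for each edge `e`, the pair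
`(T_e^1, T_e^2)` of decorated trees obtained by deleting `e`; `T_e^2` contains the root,
and the decorations are restricted (labels, edge orientations and planar order are
retained). -/
def DTree.cuts : DTree s t → List (DTree s t × DTree s t)
  | .node x l => (DTree.cutsL l).map (fun p => (p.1, .node x p.2))
/-- Auxiliary to `DTree.cuts`. -/
def DTree.cutsL : List (Bool × DTree s t) →
    List (DTree s t × List (Bool × DTree s t))
  | [] => []
  | (b, u) :: ts =>
      ((u, ts) :: (DTree.cuts u).map (fun p => (p.1, (b, p.2) :: ts)))
        ++ (DTree.cutsL ts).map (fun p => (p.1, (b, u) :: p.2))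
end

end DTreeOps

open scoped Classical in
/-- The path with source `v` and arrows `l`, or the trivial path at `v` if the data is
not a path. -/
def mkQPD {I E : Type*} (s t : E → I) (v : I) (l : List (Arr E)) : QPath s t :=
  if h : IsPathFrom s t v l then ⟨v, l, h⟩ else ⟨v, [], trivial⟩

open scoped Classical in
/-- The dual decorated rooted tree of the chord diagram of a cut `H` (a list of chords)
of the path `a₁ ⋯ aₙ` (arrow list `l`), built recursively face by face.  The face under
a chord `(i,j)` (and above the chords nested directly below it) gives a vertex; its
children are the chords directly nested below, from left to right (the ribbon/corner
structure), the orientation of a dual edge is `true` (from parent to child) exactly when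
the left endpoint of the corresponding chord is an arrow of `Q` (recall that the chord
through `(i,j)` is oriented from `i` to `j` if `a_i ∈ Q`, the dual edge crossing it
positively), and the label is the path formed by the arrows lying in the face and
incident to no chord.  The arguments are: fuel (for termination; it is never exhausted
when called with fuel larger than the length of `l`), the chords to be processed, the
window `[lo, hi)` of positions, and the source vertex of the label path of the current
face. -/
def buildT {I E : Type*} (s t : E → I) (l : List (Arr E)) :
    ℕ → List (ℕ × ℕ) → ℕ → ℕ → I → DTree s t
  | 0, _, _, _, v => .node (mkQPD s t v []) []
  | fuel+1, H, lo, hi, v =>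
      let outer : List (ℕ × ℕ) := (List.range l.length).filterMap (fun i =>
        match H.find? (fun c => c.1 == i) with
        | some c => if lo ≤ c.1 ∧ c.2 < hi ∧
            ¬ (H.any (fun c' =>
              decide (c' ≠ c ∧ lo ≤ c'.1 ∧ c'.1 < c.1 ∧ c.2 < c'.2 ∧ c'.2 < hi)))
            then some c else none
        | none => none)
      let lbl : List (Arr E) := (List.range l.length).filterMap (fun m =>
        if lo ≤ m ∧ m < hi ∧ ¬ outer.any (fun c => decide (c.1 ≤ m ∧ m ≤ c.2))
        then l[m]? else none)
      .node (mkQPD s t v lbl)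
        (outer.map (fun c =>
          ((match l[c.1]? with | some (.inl _) => true | _ => false),
           buildT s t l fuel
             (H.filter (fun c' => decide (c.1 < c'.1 ∧ c'.2 < c.2)))
             (c.1+1) c.2
             (match l[c.1]? with | some a => atgt s t a | none => v))))

/-- The dual decorated rooted tree `(T_H, s_H)` of a cut `H` of a path. -/
def dualTree {I E : Type*} (s t : E → I) (v : I) (l : List (Arr E))
    (H : Finset (ℕ × ℕ)) : DTree s t :=
  buildT s t l (l.length + 1) H.toList 0 l.length v

/-- The finset of all cuts of the list of arrows `l`. -/
def allCuts {E : Type*} (l : List (Arr E)) : Finset (Finset (ℕ × ℕ)) :=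
  open scoped Classical in
  ((Finset.range l.length ×ˢ Finset.range l.length).powerset).filter
    (fun H => IsCut l H)

open scoped Classical

/-- The sum of a list of elements of an additive commutative monoid. -/
def lsum {M : Type*} [AddCommMonoid M] (l : List M) : M := l.foldr (· + ·) 0

variable (k : Type*) [CommRing k] {I E : Type*} (s t : E → I)

/-- `P`, the path algebra as a `k`-module: free on the set of paths of `Q̄`. -/
abbrev PathMod := QPath s t →₀ k

/-- `T_rt(Φ_rt)`: the free `k`-module on the isomorphism classes of pairs `(T,s)` with
`T` a rooted tree and `s ∈ Φ_rt(T)`, realized as the free module on `DTree`. -/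
abbrev DMod := DTree s t →₀ k

/-- The basis vector of a path, or `0` if the data does not define a path. -/
def mkP (v : I) (l : List (Arr E)) : PathMod k s t :=
  if h : IsPathFrom s t v l then Finsupp.single ⟨v, l, h⟩ (1 : k) else 0

/-- The summand of `δ_{p,rt}` for a pair of positions `i < j`:
`−ω(a_i,a_j) ((a_i)_t a_{i+1}⋯a_{j−1}) ⊗ ((a₁)_s a₁⋯a_{i−1} a_{j+1}⋯aₙ)`. -/
def dpTerm (p : QPath s t) (i j : ℕ) : PathMod k s t ⊗[k] PathMod k s t :=
  match p.arrows[i]?, p.arrows[j]? with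
  | some a, some b =>
      (-(omg k a b)) •
        (mkP k s t (atgt s t a) ((p.arrows.drop (i+1)).take (j - i - 1)) ⊗ₜ[k]
          mkP k s t p.src (p.arrows.take i ++ p.arrows.drop (j+1)))
  | _, _ => (0 : k) • (mkP k s t p.src [] ⊗ₜ[k] mkP k s t p.src [])

/-- The rooted pre-Lie comultiplication `δ_{p,rt}` on the path algebra `P`. -/
def deltaPrt : PathMod k s t →ₗ[k] PathMod k s t ⊗[k] PathMod k s t :=
  Finsupp.lift (PathMod k s t ⊗[k] PathMod k s t) k (QPath s t) fun p =>
    ∑ i ∈ Finset.range p.arrows.length, ∑ j ∈ Finset.range p.arrows.length,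
      if i < j then dpTerm k s t p i j else (0 : k) • dpTerm k s t p i j

/-- The pre-Lie comultiplication `ρ((T,s)) = Σ_{e∈E(T)} (T_e^1, s|) ⊗ (T_e^2, s|)` on
`T_rt(Φ_rt)`. -/
def rhoD : DMod k s t →ₗ[k] DMod k s t ⊗[k] DMod k s t :=
  Finsupp.lift (DMod k s t ⊗[k] DMod k s t) k (DTree s t) fun T =>
    lsum ((DTree.cuts T).map fun p =>
      Finsupp.single p.1 (1 : k) ⊗ₜ[k] Finsupp.single p.2 (1 : k))

/-- The homomorphism `η_rt(a₁⋯aₙ) = Σ_{cuts H} ε_H (T_H, s_H)`. -/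
def etaRt : PathMod k s t →ₗ[k] DMod k s t :=
  Finsupp.lift (DMod k s t) k (QPath s t) fun p =>
    ∑ H ∈ allCuts p.arrows,
      epsH k p.arrows H • Finsupp.single (dualTree s t p.src p.arrows H) (1 : k)

/-! ### Cut words

A word together with a cut is encoded by a structural syntax tree. -/

/-- A word in the double quiver together with a noncrossing system of chords: the empty word,
a word starting with an arrow incident to no chord, or a word `a m a* r` whose first arrow `a`
is joined to `a*` by a chord. -/
inductive CutWord (E : Type*) : Type _
  | nil : CutWord E
  | arr : Arr E → CutWord E → CutWord E
  | chord : Arr E → CutWord E → CutWord E → CutWord E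

namespace CutWord

section Basic

variable {E : Type*}

/-- The underlying word. -/
def word : CutWord E → List (Arr E)
  | nil => []
  | arr a w => a :: word w
  | chord a m r => a :: (word m ++ astar a :: word r)

/-- The length of the underlying word. -/
def len : CutWord E → ℕ
  | nil => 0
  | arr _ w => len w + 1
  | chord _ m r => len m + len r + 2

/-- The arrows on the outer face that are incident to no chord. -/
def lbl : CutWord E → List (Arr E)
  | nil => []
  | arr a w => a :: lbl w
  | chord _ _ r => lbl r

/-- The positions of the arrows of `lbl w` when `w` starts at position `o`. -/
def freePos : ℕ → CutWord E → List ℕ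
  | _, nil => []
  | o, arr _ w => o :: freePos (o + 1) w
  | o, chord _ m r => freePos (o + len m + 2) r

/-- The chords of `w`, when `w` starts at position `o`. -/
def chords : ℕ → CutWord E → List (ℕ × ℕ)
  | _, nil => []
  | o, arr _ w => chords (o + 1) w
  | o, chord _ m r =>
      (o, o + len m + 1) :: (chords (o + 1) m ++ chords (o + len m + 2) r)

/-- The outermost chords of `w` with their left arrow and the cut word below them, when `w`
starts at position `o`. -/
def tops : ℕ → CutWord E → List ((ℕ × ℕ) × Arr E × CutWord E)
  | _, nil => []
  | o, arr _ w => tops (o + 1) w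
  | o, chord a m r => ((o, o + len m + 1), a, m) :: tops (o + len m + 2) r

/-- The cut word `w` sits at position `o` of the list `L`. -/
def Fits (L : List (Arr E)) : ℕ → CutWord E → Prop
  | _, nil => True
  | o, arr a w => L[o]? = some a ∧ Fits L (o + 1) w
  | o, chord a m r => L[o]? = some a ∧ Fits L (o + 1) m ∧
      L[o + len m + 1]? = some (astar a) ∧ Fits L (o + len m + 2) r

/-- The cut word without chords. -/
def flat : List (Arr E) → CutWord E
  | [] => nil
  | a :: l => arr a (flat l)

/-- The chords of `w`: position of the left arrow, left arrow, cut word below the chord,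
and the cut word obtained by deleting everything from the left to the right end of the chord. -/
def splits : CutWord E → List (ℕ × Arr E × CutWord E × CutWord E)
  | nil => []
  | arr b w => (splits w).map fun x => (x.1 + 1, x.2.1, x.2.2.1, arr b x.2.2.2)
  | chord b m r => (0, b, m, r) ::
      ((splits m).map (fun x => (x.1 + 1, x.2.1, x.2.2.1, chord b x.2.2.2 r)) ++
        (splits r).map fun x => (x.1 + len m + 2, x.2.1, x.2.2.1, chord b m x.2.2.2))

/-- Insert `a m a*`, with a chord joining its ends, at a position of a cut word. -/
def ins (a : Arr E) (m : CutWord E) : CutWord E → ℕ → CutWord E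
  | o, 0 => chord a m o
  | nil, _ + 1 => nil
  | arr b w, i + 1 => arr b (ins a m w i)
  | chord b x r, i + 1 =>
      if i ≤ len x then chord b (ins a m x i) r
      else chord b x (ins a m r (i - (len x + 1)))

@[simp] theorem length_word (w : CutWord E) : w.word.length = w.len := by
  induction w with
  | nil => rfl
  | arr a w ih => simp [word, len, ih]
  | chord a m r ihm ihr => simp [word, len, ihm, ihr]; omega

theorem word_flat (l : List (Arr E)) : (flat l).word = l := by
  induction l with
  | nil => rfl
  | cons a l ih => simp [flat, word, ih]

theorem lbl_flat (l : List (Arr E)) : (flat l).lbl = l := by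
  induction l with
  | nil => rfl
  | cons a l ih => simp [flat, lbl, ih]

theorem fits_iff (L : List (Arr E)) (o : ℕ) (w : CutWord E) :
    Fits L o w ↔ ∀ i < w.len, L[o + i]? = w.word[i]? := by
  induction w generalizing o with
  | nil => simp [Fits, len]
  | arr a w ih =>
    simp only [Fits, ih, word, len]
    constructor
    · rintro ⟨h0, h⟩ (_ | i) hi
      · simpa using h0
      · have := h i (by omega)
        rw [List.getElem?_cons_succ, ← this]; congr 1; omega
    · intro h
      refine ⟨by simpa using h 0 (by omega), fun i hi => ?_⟩
      have := h (i + 1) (by omega)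
      rw [List.getElem?_cons_succ] at this
      rw [← this]; congr 1; omega
  | chord a m r ihm ihr =>
    simp only [Fits, ihm, ihr, word, len]
    constructor
    · rintro ⟨h0, hm, h1, hr⟩ (_ | i) hi
      · simpa using h0
      · rw [List.getElem?_cons_succ]
        rcases lt_trichotomy i m.len with h | h | h
        · rw [List.getElem?_append_left (by simpa using h), ← hm i h]; congr 1; omega
        · rw [List.getElem?_append_right (by simp [h])]
          simp only [length_word, h, Nat.sub_self, List.getElem?_cons_zero]
          rw [← h1]; congr 1
        · rw [List.getElem?_append_right (by simp; omega)]
          obtain ⟨q, rfl⟩ : ∃ q, i = m.len + (q + 1) := ⟨i - m.len - 1, by omega⟩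
          simp only [length_word, Nat.add_sub_cancel_left, List.getElem?_cons_succ]
          rw [← hr q (by omega)]; congr 1; omega
    · intro h
      refine ⟨by simpa using h 0 (by omega), fun i hi => ?_, ?_, fun i hi => ?_⟩
      · have := h (i + 1) (by omega)
        rw [List.getElem?_cons_succ, List.getElem?_append_left (by simpa using hi)] at this
        rw [← this]; congr 1; omega
      · have := h (m.len + 1) (by omega)
        rw [List.getElem?_cons_succ, List.getElem?_append_right (by simp)] at this
        simpa [← add_assoc] using this
      · have := h (m.len + (i + 1) + 1) (by omega)
        rw [List.getElem?_cons_succ, List.getElem?_append_right (by simp)] at this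
        simp only [length_word, Nat.add_sub_cancel_left, List.getElem?_cons_succ] at this
        rw [← this]; congr 1; omega

theorem word_eq_iff (l : List (Arr E)) (w : CutWord E) :
    w.word = l ↔ Fits l 0 w ∧ w.len = l.length := by
  rw [fits_iff]
  constructor
  · rintro rfl; simp
  · rintro ⟨h, hl⟩
    apply List.ext_getElem?
    intro i
    rcases lt_or_ge i w.len with hi | hi
    · simpa using (h i hi).symm
    · rw [List.getElem?_eq_none (by simpa), List.getElem?_eq_none (by omega)]

/-! #### Chords -/

theorem bounds_of_mem_chords {o : ℕ} {w : CutWord E} {c : ℕ × ℕ} (h : c ∈ chords o w) :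
    o ≤ c.1 ∧ c.1 < c.2 ∧ c.2 < o + w.len := by
  induction w generalizing o with
  | nil => simp [chords] at h
  | arr a w ih => have := ih h; simp only [len]; omega
  | chord a m r ihm ihr =>
    simp only [chords, List.mem_cons, List.mem_append] at h
    simp only [len]
    rcases h with rfl | h | h
    · simp; omega
    · have := ihm h; omega
    · have := ihr h; omega

theorem pairwise_chords (o : ℕ) (w : CutWord E) :
    (chords o w).Pairwise fun c c' => c.1 < c'.1 := by
  induction w generalizing o with
  | nil => simp [chords]
  | arr a w ih => exact ih _
  | chord a m r ihm ihr =>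
    simp only [chords, List.pairwise_cons, List.pairwise_append, List.mem_append]
    refine ⟨?_, ihm _, ihr _, ?_⟩
    · rintro c (h | h) <;> have := bounds_of_mem_chords h <;> omega
    · intro c h c' h'
      have := bounds_of_mem_chords h
      have := bounds_of_mem_chords h'
      omega

theorem nodup_chords (o : ℕ) (w : CutWord E) : (chords o w).Nodup :=
  (pairwise_chords o w).imp fun h e => by simp [e] at h

theorem arrows_of_mem_chords {L : List (Arr E)} {o : ℕ} {w : CutWord E} (hw : Fits L o w)
    {c : ℕ × ℕ} (h : c ∈ chords o w) :
    ∃ a, L[c.1]? = some a ∧ L[c.2]? = some (astar a) := by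
  induction w generalizing o with
  | nil => simp [chords] at h
  | arr a w ih => exact ih hw.2 h
  | chord a m r ihm ihr =>
    simp only [chords, List.mem_cons, List.mem_append] at h
    obtain ⟨h0, hm, h1, hr⟩ := hw
    rcases h with rfl | h | h
    · exact ⟨a, h0, h1⟩
    · exact ihm hm h
    · exact ihr hr h

/-- Distinct chords of a cut word have no common endpoint and do not cross. -/
theorem chords_disjoint {o : ℕ} {w : CutWord E} {c c' : ℕ × ℕ}
    (h : c ∈ chords o w) (h' : c' ∈ chords o w) (hne : c ≠ c') :
    (c.1 ≠ c'.1 ∧ c.1 ≠ c'.2 ∧ c.2 ≠ c'.1 ∧ c.2 ≠ c'.2) ∧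
      ¬ (c.1 < c'.1 ∧ c'.1 < c.2 ∧ c.2 < c'.2) := by
  induction w generalizing o with
  | nil => simp [chords] at h
  | arr a w ih => exact ih h h'
  | chord a m r ihm ihr =>
    simp only [chords, List.mem_cons, List.mem_append] at h h'
    rcases h with rfl | h | h <;> rcases h' with rfl | h' | h'
    · exact absurd rfl hne
    · have := bounds_of_mem_chords h'; simp only; omega
    · have := bounds_of_mem_chords h'; simp only; omega
    · have := bounds_of_mem_chords h; simp only; omega
    · exact ihm h h'
    · have := bounds_of_mem_chords h; have := bounds_of_mem_chords h'; omega
    · have := bounds_of_mem_chords h; simp only; omega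
    · have := bounds_of_mem_chords h; have := bounds_of_mem_chords h'; omega
    · exact ihr h h'

theorem isCut_chords (w : CutWord E) : IsCut w.word (chords 0 w).toFinset := by
  have hw := ((word_eq_iff _ w).1 rfl).1
  refine ⟨fun c hc => ?_, fun c hc c' hc' hne => ?_, ?_⟩
  · rw [List.mem_toFinset] at hc
    have hb := bounds_of_mem_chords hc
    obtain ⟨a, ha, hb'⟩ := arrows_of_mem_chords hw hc
    refine ⟨hb.2.1, by simpa using hb.2.2, ?_⟩
    rcases a with e | e
    · exact ⟨e, Or.inl ⟨ha, hb'⟩⟩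
    · exact ⟨e, Or.inr ⟨ha, hb'⟩⟩
  · rw [List.mem_toFinset] at hc hc'
    exact (chords_disjoint hc hc' hne).1
  · rintro ⟨c, hc, c', hc', h⟩
    rw [List.mem_toFinset] at hc hc'
    exact (chords_disjoint hc hc' (by rintro rfl; omega)).2 h

/-- A cut word is determined by its word and its chords. -/
theorem eq_of_chords {L : List (Arr E)} {o : ℕ} {w w' : CutWord E}
    (hw : Fits L o w) (hw' : Fits L o w') (hl : w.len = w'.len)
    (hc : ∀ c, c ∈ chords o w ↔ c ∈ chords o w') : w = w' := by
  induction w generalizing o w' with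
  | nil => cases w' <;> simp [len] at hl ⊢
  | arr a w ih =>
    cases w' with
    | nil => simp [len] at hl
    | arr a' w' =>
      have ha : a = a' := by have := hw.1.symm.trans hw'.1; simpa using this
      rw [ha, ih hw.2 hw'.2 (by simpa [len] using hl) hc]
    | chord a' m' r' =>
      have := bounds_of_mem_chords (w := w) ((hc (o, o + len m' + 1)).2 (by simp [chords]))
      simp at this
  | chord a m r ihm ihr =>
    cases w' with
    | nil => simp [len] at hl
    | arr a' w' =>
      have := bounds_of_mem_chords (w := w') ((hc (o, o + len m + 1)).1 (by simp [chords]))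
      simp at this
    | chord a' m' r' =>
      have ha : a = a' := by have := hw.1.symm.trans hw'.1; simpa using this
      subst ha
      have hm : m.len = m'.len := by
        by_contra hne
        have h1 := (hc (o, o + len m + 1)).1 (by simp [chords])
        have h2 : (o, o + len m' + 1) ∈ chords o (chord a m' r') := by simp [chords]
        exact (chords_disjoint h1 h2 (by simp [hne])).1.1 rfl
      have hr : r.len = r'.len := by simp only [len] at hl; omega
      simp only [chords, List.mem_cons, List.mem_append, ← hm] at hc
      obtain ⟨-, hwm, -, hwr⟩ := hw
      obtain ⟨-, hwm', -, hwr'⟩ := hw'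
      rw [← hm] at hwr'
      congr 1
      · refine ihm hwm hwm' hm fun c => ⟨fun h => ?_, fun h => ?_⟩
        · have hb := bounds_of_mem_chords h
          rcases (hc c).1 (Or.inr (Or.inl h)) with rfl | h | h
          · simp at hb
          · exact h
          · have := bounds_of_mem_chords h; omega
        · have hb := bounds_of_mem_chords h
          rcases (hc c).2 (Or.inr (Or.inl h)) with rfl | h | h
          · simp at hb
          · exact h
          · have := bounds_of_mem_chords h; omega
      · refine ihr hwr hwr' hr fun c => ⟨fun h => ?_, fun h => ?_⟩
        · have hb := bounds_of_mem_chords h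
          rcases (hc c).1 (Or.inr (Or.inr h)) with rfl | h | h
          · simp at hb; omega
          · have := bounds_of_mem_chords h; omega
          · exact h
        · have hb := bounds_of_mem_chords h
          rcases (hc c).2 (Or.inr (Or.inr h)) with rfl | h | h
          · simp at hb; omega
          · have := bounds_of_mem_chords h; omega
          · exact h

/-- Every noncrossing system of chords in a window comes from a cut word. -/
theorem exists_chords (L : List (Arr E)) (n o : ℕ) (ho : o + n ≤ L.length)
    (H : Finset (ℕ × ℕ))
    (h1 : ∀ c ∈ H, o ≤ c.1 ∧ c.1 < c.2 ∧ c.2 < o + n ∧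
      ∃ a, L[c.1]? = some a ∧ L[c.2]? = some (astar a))
    (h2 : ∀ c ∈ H, ∀ c' ∈ H, c ≠ c' →
      (c.1 ≠ c'.1 ∧ c.1 ≠ c'.2 ∧ c.2 ≠ c'.1 ∧ c.2 ≠ c'.2) ∧
        ¬ (c.1 < c'.1 ∧ c'.1 < c.2 ∧ c.2 < c'.2)) :
    ∃ w : CutWord E, Fits L o w ∧ w.len = n ∧ ∀ c, c ∈ chords o w ↔ c ∈ H := by
  induction n using Nat.strong_induction_on generalizing o H with
  | _ n ih =>
    rcases n with _ | n
    · refine ⟨nil, trivial, rfl, fun c => ⟨fun h => by simp [chords] at h, fun h => ?_⟩⟩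
      have := h1 c h; omega
    by_cases hex : ∃ c ∈ H, c.1 = o
    · obtain ⟨j, hc⟩ : ∃ j, (o, j) ∈ H := by
        obtain ⟨c, hc, rfl⟩ := hex
        exact ⟨c.2, hc⟩
      obtain ⟨-, hj, hjn, a, ha, ha'⟩ := h1 _ hc
      simp only at hj hjn ha ha'
      have key : ∀ c ∈ H, c = (o, j) ∨ (o < c.1 ∧ c.2 < j) ∨ j < c.1 := by
        intro c hc'
        by_cases he : c = (o, j)
        · exact Or.inl he
        · have := h1 c hc'
          have := h2 _ hc _ hc' (Ne.symm he)
          simp only at this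
          omega
      obtain ⟨m, hm, hml, hmc⟩ := ih (j - o - 1) (by omega) (o + 1) (by omega)
        (H.filter fun c => o < c.1 ∧ c.2 < j)
        (fun c hc => by
          rw [Finset.mem_filter] at hc
          obtain ⟨_, _, _, h⟩ := h1 c hc.1
          exact ⟨by omega, by omega, by omega, h⟩)
        (fun c hc c' hc' => h2 c (Finset.mem_filter.1 hc).1 c' (Finset.mem_filter.1 hc').1)
      obtain ⟨r, hr, hrl, hrc⟩ := ih (o + n - j) (by omega) (j + 1) (by omega)
        (H.filter fun c => j < c.1)
        (fun c hc => by
          rw [Finset.mem_filter] at hc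
          obtain ⟨_, _, _, h⟩ := h1 c hc.1
          exact ⟨by omega, by omega, by omega, h⟩)
        (fun c hc c' hc' => h2 c (Finset.mem_filter.1 hc).1 c' (Finset.mem_filter.1 hc').1)
      have e1 : o + m.len + 1 = j := by omega
      have e2 : o + m.len + 2 = j + 1 := by omega
      refine ⟨chord a m r, ?_, by simp only [len]; omega, fun c => ?_⟩
      · simp only [Fits, e1, e2]
        exact ⟨ha, hm, ha', hr⟩
      · simp only [chords, e1, e2, List.mem_cons, List.mem_append, hmc, hrc, Finset.mem_filter]
        constructor
        · rintro (rfl | h | h)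
          · exact hc
          · exact h.1
          · exact h.1
        · intro h
          rcases key c h with h' | h' | h'
          · exact Or.inl h'
          · exact Or.inr (Or.inl ⟨h, h'⟩)
          · exact Or.inr (Or.inr ⟨h, h'⟩)
    · push Not at hex
      obtain ⟨w, hw, hwl, hwc⟩ := ih n (by omega) (o + 1) (by omega) H
        (fun c hc => by
          obtain ⟨_, _, _, h⟩ := h1 c hc
          have := hex c hc
          exact ⟨by omega, by omega, by omega, h⟩) h2
      refine ⟨arr (L[o]'(by omega)) w, ⟨by simp, hw⟩, by simp [len, hwl], hwc⟩

theorem exists_of_isCut {l : List (Arr E)} {H : Finset (ℕ × ℕ)} (h : IsCut l H) :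
    ∃ w : CutWord E, w.word = l ∧ (chords 0 w).toFinset = H := by
  obtain ⟨w, hw, hl, hc⟩ := exists_chords l l.length 0 (by omega) H
    (fun c hc => by
      obtain ⟨h1, h2, e, h3 | h3⟩ := h.1 c hc
      · exact ⟨by omega, h1, by omega, _, h3⟩
      · exact ⟨by omega, h1, by omega, _, h3⟩)
    (fun c hc c' hc' hne => ⟨h.2.1 c hc c' hc' hne, fun hx => h.2.2 ⟨c, hc, c', hc', hx⟩⟩)
  exact ⟨w, (word_eq_iff _ _).2 ⟨hw, hl⟩, by ext c; simp [hc]⟩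

theorem mem_allCuts {l : List (Arr E)} {H : Finset (ℕ × ℕ)} : H ∈ allCuts l ↔ IsCut l H := by
  simp only [allCuts, Finset.mem_filter, Finset.mem_powerset, and_iff_right_iff_imp]
  intro h c hc
  have := h.1 c hc
  simp only [Finset.mem_product, Finset.mem_range]
  omega

theorem injOn_chords (l : List (Arr E)) :
    Set.InjOn (fun w : CutWord E => (chords 0 w).toFinset) {w | w.word = l} := by
  intro w hw w' hw' h
  obtain ⟨h1, h2⟩ := (word_eq_iff _ _).1 hw
  obtain ⟨h1', h2'⟩ := (word_eq_iff _ _).1 hw'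
  exact eq_of_chords h1 h1' (h2.trans h2'.symm) fun c => by
    simpa using Finset.ext_iff.1 h c

theorem finite_word_eq (l : List (Arr E)) : {w : CutWord E | w.word = l}.Finite := by
  refine Set.Finite.of_injOn (t := (allCuts l : Set (Finset (ℕ × ℕ)))) ?_ (injOn_chords l)
    (Finset.finite_toSet _)
  rintro w rfl
  exact mem_allCuts.2 (isCut_chords w)

/-- The cut words with given underlying word. -/
def cutWords (l : List (Arr E)) : Finset (CutWord E) := (finite_word_eq l).toFinset

@[simp] theorem mem_cutWords {l : List (Arr E)} {w : CutWord E} :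
    w ∈ cutWords l ↔ w.word = l := by
  simp [cutWords]

theorem sum_allCuts {M : Type*} [AddCommMonoid M] (l : List (Arr E))
    (f : Finset (ℕ × ℕ) → M) :
    ∑ H ∈ allCuts l, f H = ∑ w ∈ cutWords l, f (chords 0 w).toFinset := by
  symm
  refine Finset.sum_bij (fun w _ => (chords 0 w).toFinset) ?_ ?_ ?_ (fun _ _ => rfl)
  · intro w hw
    rw [mem_cutWords] at hw
    exact mem_allCuts.2 (hw ▸ isCut_chords w)
  · intro w hw w' hw' h
    exact injOn_chords l (mem_cutWords.1 hw) (mem_cutWords.1 hw') h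
  · intro H hH
    obtain ⟨w, hw, h⟩ := exists_of_isCut (mem_allCuts.1 hH)
    exact ⟨w, mem_cutWords.2 hw, h⟩

end Basic

section Faces

variable {E : Type*}

theorem chords_of_mem_tops {o : ℕ} {w : CutWord E} {x : (ℕ × ℕ) × Arr E × CutWord E}
    (h : x ∈ tops o w) :
    x.1 ∈ chords o w ∧ x.1.2 = x.1.1 + x.2.2.len + 1 ∧
      ∀ c, c ∈ chords (x.1.1 + 1) x.2.2 ↔ c ∈ chords o w ∧ x.1.1 < c.1 ∧ c.2 < x.1.2 := by
  induction w generalizing o with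
  | nil => simp [tops] at h
  | arr a w ih => exact ih h
  | chord a m r ihm ihr =>
    simp only [tops, List.mem_cons] at h
    simp only [chords, List.mem_cons, List.mem_append]
    rcases h with rfl | h
    · refine ⟨Or.inl rfl, rfl, fun c => ⟨fun h => ⟨Or.inr (Or.inl h), ?_⟩, ?_⟩⟩
      · have := bounds_of_mem_chords h; dsimp only at this ⊢; omega
      · rintro ⟨rfl | h | h, h', h''⟩
        · simp at h'
        · exact h
        · have := bounds_of_mem_chords h; dsimp only at h' h''; omega
    · obtain ⟨h1, h2, h3⟩ := ihr h
      refine ⟨Or.inr (Or.inr h1), h2, fun c => ?_⟩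
      rw [h3]
      have hb := bounds_of_mem_chords h1
      constructor
      · rintro ⟨h, h'⟩; exact ⟨Or.inr (Or.inr h), h'⟩
      · rintro ⟨rfl | h | h, h'⟩
        · simp only at h'; omega
        · have := bounds_of_mem_chords h; omega
        · exact ⟨h, h'⟩

theorem fits_of_mem_tops {L : List (Arr E)} {o : ℕ} {w : CutWord E} (hw : Fits L o w)
    {x : (ℕ × ℕ) × Arr E × CutWord E} (h : x ∈ tops o w) :
    L[x.1.1]? = some x.2.1 ∧ Fits L (x.1.1 + 1) x.2.2 ∧ x.2.2.len < w.len := by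
  induction w generalizing o with
  | nil => simp [tops] at h
  | arr a w ih => have := ih hw.2 h; simp only [len]; exact ⟨this.1, this.2.1, by omega⟩
  | chord a m r ihm ihr =>
    simp only [tops, List.mem_cons] at h
    obtain ⟨h0, hm, h1, hr⟩ := hw
    rcases h with rfl | h
    · exact ⟨h0, hm, by simp only [len]; omega⟩
    · have := ihr hr h; simp only [len]; exact ⟨this.1, this.2.1, by omega⟩

theorem pairwise_tops (o : ℕ) (w : CutWord E) :
    ((tops o w).map Prod.fst).Pairwise fun c c' => c.1 < c'.1 := by
  induction w generalizing o with
  | nil => simp [tops]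
  | arr a w ih => exact ih _
  | chord a m r ihm ihr =>
    simp only [tops, List.map_cons, List.pairwise_cons]
    refine ⟨fun c h => ?_, ihr _⟩
    obtain ⟨x, hx, rfl⟩ := List.mem_map.1 h
    have := bounds_of_mem_chords (chords_of_mem_tops hx).1
    omega

/-- The outermost chords are those not below another chord. -/
theorem mem_map_tops {o : ℕ} {w : CutWord E} {c : ℕ × ℕ} :
    c ∈ (tops o w).map Prod.fst ↔
      c ∈ chords o w ∧ ∀ c' ∈ chords o w, ¬ (c'.1 < c.1 ∧ c.2 < c'.2) := by
  induction w generalizing o with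
  | nil => simp [tops, chords]
  | arr a w ih => exact ih
  | chord a m r ihm ihr =>
    simp only [tops, List.map_cons, List.mem_cons, ihr, chords, List.mem_append]
    constructor
    · rintro (rfl | ⟨h, h'⟩)
      · refine ⟨Or.inl rfl, ?_⟩
        rintro c (rfl | h | h)
        · simp
        · have := bounds_of_mem_chords h; simp only; omega
        · have := bounds_of_mem_chords h; simp only; omega
      · refine ⟨Or.inr (Or.inr h), ?_⟩
        have hb := bounds_of_mem_chords h
        rintro c' (rfl | h | h)
        · simp only; omega
        · have := bounds_of_mem_chords h; omega
        · exact h' c' h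
    · rintro ⟨rfl | h | h, h'⟩
      · exact Or.inl rfl
      · have := bounds_of_mem_chords h
        exact absurd ⟨by simp only; omega, by simp only; omega⟩ (h' _ (Or.inl rfl))
      · exact Or.inr ⟨h, fun c' hc' => h' c' (Or.inr (Or.inr hc'))⟩

theorem mem_freePos {o : ℕ} {w : CutWord E} {i : ℕ} :
    i ∈ freePos o w ↔
      (o ≤ i ∧ i < o + w.len) ∧ ∀ c ∈ (tops o w).map Prod.fst, ¬ (c.1 ≤ i ∧ i ≤ c.2) := by
  induction w generalizing o with
  | nil => simp [freePos, len]
  | arr a w ih =>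
    simp only [freePos, List.mem_cons, ih, tops, len]
    constructor
    · rintro (rfl | ⟨h, h'⟩)
      · refine ⟨by omega, fun c hc => ?_⟩
        have := bounds_of_mem_chords (mem_map_tops.1 hc).1; omega
      · exact ⟨by omega, h'⟩
    · rintro ⟨h, h'⟩
      by_cases hi : i = o
      · exact Or.inl hi
      · exact Or.inr ⟨by omega, h'⟩
  | chord a m r ihm ihr =>
    simp only [freePos, ihr, tops, len, List.map_cons, List.mem_cons, forall_eq_or_imp]
    constructor
    · rintro ⟨h, h'⟩
      exact ⟨by omega, by omega, h'⟩
    · rintro ⟨h, h', h''⟩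
      exact ⟨by omega, h''⟩

theorem pairwise_freePos (o : ℕ) (w : CutWord E) : (freePos o w).Pairwise (· < ·) := by
  induction w generalizing o with
  | nil => simp [freePos]
  | arr a w ih =>
    refine List.pairwise_cons.2 ⟨fun i hi => ?_, ih _⟩
    have := (mem_freePos.1 hi).1; omega
  | chord a m r ihm ihr => exact ihr _

theorem filterMap_freePos {L : List (Arr E)} {o : ℕ} {w : CutWord E} (hw : Fits L o w) :
    (freePos o w).filterMap (fun i => L[i]?) = w.lbl := by
  induction w generalizing o with
  | nil => rfl
  | arr a w ih => simp [freePos, lbl, hw.1, ih hw.2]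
  | chord a m r ihm ihr => exact ihr hw.2.2.2

end Faces

/-- Two lists that are strictly increasing with respect to `f` are equal as soon as they have
the same members. -/
theorem eq_of_pairwise_of_mem_iff {α : Type*} (f : α → ℕ) {l l' : List α}
    (h : l.Pairwise fun x y => f x < f y) (h' : l'.Pairwise fun x y => f x < f y)
    (hm : ∀ x, x ∈ l ↔ x ∈ l') : l = l' := by
  have nd : ∀ {l : List α}, (l.Pairwise fun x y => f x < f y) → l.Nodup :=
    fun h => h.imp fun h e => by simp [e] at h
  refine ((List.perm_ext_iff_of_nodup (nd h) (nd h')).2 hm).eq_of_pairwise ?_ h h'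
  intro a b _ _ h1 h2
  omega

section Tree

variable {I E : Type*} (s t : E → I)

/-- The children of the root of the dual tree of a cut word. -/
def children : CutWord E → List (Bool × DTree s t)
  | nil => []
  | arr _ w => children w
  | chord a m r =>
      (a.isLeft, .node (mkQPD s t (atgt s t a) m.lbl) (children m)) :: children r

/-- The dual tree of a cut word. -/
def tree (v : I) (w : CutWord E) : DTree s t :=
  .node (mkQPD s t v w.lbl) (children s t w)

theorem children_eq_map_tops (o : ℕ) (w : CutWord E) :
    children s t w =
      (tops o w).map fun x => (x.2.1.isLeft, tree s t (atgt s t x.2.1) x.2.2) := by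
  induction w generalizing o with
  | nil => rfl
  | arr a w ih => exact ih _
  | chord a m r ihm ihr => simp only [children, tops, List.map_cons, ← ihr]; rfl

theorem buildT_eq_tree (L : List (Arr E)) (fuel : ℕ) (H : List (ℕ × ℕ)) (o hi : ℕ) (v : I)
    (w : CutWord E) (hw : Fits L o w) (hhi : hi = o + w.len) (hL : hi ≤ L.length)
    (hH : ∀ c, c ∈ H ↔ c ∈ chords o w) (hf : w.len < fuel) :
    buildT s t L fuel H o hi v = tree s t v w := by
  induction fuel generalizing H o hi v w with
  | zero => omega
  | succ fuel ih =>
    have hfind : ∀ i c, H.find? (fun c => c.1 == i) = some c ↔ c ∈ chords o w ∧ c.1 = i := by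
      intro i c
      constructor
      · intro h
        exact ⟨(hH c).1 (List.mem_of_find?_eq_some h), by simpa using List.find?_some h⟩
      · rintro ⟨h, rfl⟩
        rcases hd : H.find? (fun c' => c'.1 == c.1) with _ | c'
        · have := List.find?_eq_none.1 hd c ((hH c).2 h)
          simp at this
        · have h' := (hH c').1 (List.mem_of_find?_eq_some hd)
          have he : c'.1 = c.1 := by simpa using List.find?_some hd
          by_contra hne
          exact (chords_disjoint h' h (fun e => hne (by rw [hd, e]))).1.1 he
    have houter : ((List.range L.length).filterMap (fun i =>
        match H.find? (fun c => c.1 == i) with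
        | some c => if o ≤ c.1 ∧ c.2 < hi ∧
            ¬ (H.any (fun c' =>
              decide (c' ≠ c ∧ o ≤ c'.1 ∧ c'.1 < c.1 ∧ c.2 < c'.2 ∧ c'.2 < hi)))
            then some c else none
        | none => none)) = (tops o w).map Prod.fst := by
      have hmem : ∀ i c, (match H.find? (fun c => c.1 == i) with
        | some c => if o ≤ c.1 ∧ c.2 < hi ∧
            ¬ (H.any (fun c' =>
              decide (c' ≠ c ∧ o ≤ c'.1 ∧ c'.1 < c.1 ∧ c.2 < c'.2 ∧ c'.2 < hi)))
            then some c else none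
        | none => none) = some c ↔ c ∈ (tops o w).map Prod.fst ∧ c.1 = i := by
        intro i c
        rw [mem_map_tops]
        rcases hd : H.find? (fun c => c.1 == i) with _ | c'
        · simp only [hd, reduceCtorEq, false_iff]
          rintro ⟨⟨h, -⟩, h'⟩
          rw [(hfind i c).2 ⟨h, h'⟩] at hd
          simp at hd
        · obtain ⟨h', rfl⟩ := (hfind i c').1 hd
          simp only [hd, Option.ite_none_right_eq_some, Option.some.injEq]
          constructor
          · rintro ⟨⟨-, -, hn⟩, rfl⟩
            refine ⟨⟨h', fun c'' hc'' hlt => hn ?_⟩, rfl⟩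
            have := bounds_of_mem_chords hc''
            rw [List.any_eq_true]
            refine ⟨c'', (hH _).2 hc'', decide_eq_true ⟨?_, by omega, hlt.1, hlt.2, by omega⟩⟩
            rintro rfl
            omega
          · rintro ⟨⟨h, hn⟩, he⟩
            have hcc : c' = c := by
              have := (hfind c'.1 c).2 ⟨h, he⟩
              rw [this] at hd
              exact (Option.some.inj hd).symm
            subst hcc
            have := bounds_of_mem_chords h
            refine ⟨⟨by omega, by omega, fun ha => ?_⟩, rfl⟩
            obtain ⟨c'', hc'', hx⟩ := List.any_eq_true.1 ha
            have hx := of_decide_eq_true hx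
            exact hn c'' ((hH _).1 hc'') ⟨hx.2.2.1, hx.2.2.2.1⟩
      refine eq_of_pairwise_of_mem_iff Prod.fst ?_ (pairwise_tops o w) ?_
      · refine List.Pairwise.filterMap _ ?_ List.pairwise_lt_range
        intro i j hij c hc c' hc'
        have h1 := ((hmem i c).1 hc).2
        have h2 := ((hmem j c').1 hc').2
        omega
      · intro c
        rw [List.mem_filterMap]
        constructor
        · rintro ⟨i, -, h⟩
          exact ((hmem i c).1 h).1
        · intro h
          have := bounds_of_mem_chords (mem_map_tops.1 h).1
          exact ⟨c.1, List.mem_range.2 (by omega), (hmem _ _).2 ⟨h, rfl⟩⟩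
    have hlbl : ((List.range L.length).filterMap (fun m =>
        if o ≤ m ∧ m < hi ∧
          ¬ ((tops o w).map Prod.fst).any (fun c => decide (c.1 ≤ m ∧ m ≤ c.2))
        then L[m]? else none)) = w.lbl := by
      rw [← filterMap_freePos hw]
      have hfilter : freePos o w = (List.range L.length).filter (fun m =>
          decide (o ≤ m ∧ m < hi ∧
            ¬ ((tops o w).map Prod.fst).any (fun c => decide (c.1 ≤ m ∧ m ≤ c.2)))) := by
        refine eq_of_pairwise_of_mem_iff id (pairwise_freePos o w)
          (List.pairwise_lt_range.filter _) fun i => ?_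
        rw [mem_freePos, List.mem_filter, List.mem_range, decide_eq_true_eq, List.any_eq_true]
        constructor
        · rintro ⟨h, h'⟩
          refine ⟨by omega, h.1, by omega, ?_⟩
          rintro ⟨c, hc, hx⟩
          exact h' c hc (of_decide_eq_true hx)
        · rintro ⟨-, h, h', hn⟩
          exact ⟨⟨h, by omega⟩, fun c hc hx => hn ⟨c, hc, decide_eq_true hx⟩⟩
      rw [hfilter, List.filterMap_filter]
      congr 1
      funext m
      simp only [decide_eq_true_eq]
    rw [buildT]
    simp only [houter]
    rw [hlbl, tree, children_eq_map_tops s t o w, List.map_map]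
    congr 1
    refine List.map_congr_left fun x hx => ?_
    obtain ⟨h1, h2, h3⟩ := chords_of_mem_tops hx
    obtain ⟨h4, h5, h6⟩ := fits_of_mem_tops hw hx
    have hb := bounds_of_mem_chords h1
    simp only [Function.comp_apply, h4]
    refine Prod.ext ?_ ?_
    · rcases x.2.1 with e | e <;> rfl
    · refine ih _ _ _ _ _ h5 (by omega) (by omega) (fun c => ?_) (by omega)
      rw [List.mem_filter, hH, h3, decide_eq_true_eq]

theorem dualTree_eq_tree (v : I) (w : CutWord E) :
    dualTree s t v w.word (chords 0 w).toFinset = tree s t v w := by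
  obtain ⟨h, h'⟩ := (word_eq_iff _ w).1 rfl
  exact buildT_eq_tree s t _ _ _ _ _ _ w h (by simp) le_rfl (fun c => by simp) (by simp)

end Tree
section Sign

variable (k : Type*) [CommRing k] {E : Type*}

/-- The sign of a cut word. -/
def sgn : CutWord E → k
  | nil => 1
  | arr _ w => sgn w
  | chord a m r => -(omg k a (astar a)) * (sgn m * sgn r)

theorem prod_epsFactor {L : List (Arr E)} {o : ℕ} {w : CutWord E} (hw : Fits L o w) :
    ((chords o w).map (epsFactor k L)).prod = w.sgn k := by
  induction w generalizing o with
  | nil => rfl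
  | arr a w ih => exact ih hw.2
  | chord a m r ihm ihr =>
    obtain ⟨h0, hm, h1, hr⟩ := hw
    rw [chords, List.map_cons, List.map_append, List.prod_cons, List.prod_append, ihm hm, ihr hr,
      sgn]
    simp only [epsFactor, h0, h1]

theorem epsH_chords (w : CutWord E) : epsH k w.word (chords 0 w).toFinset = w.sgn k := by
  rw [epsH, List.prod_toFinset _ (nodup_chords 0 w)]
  exact prod_epsFactor k ((word_eq_iff _ w).1 rfl).1

theorem sgn_flat (l : List (Arr E)) : (flat l).sgn k = 1 := by
  induction l with
  | nil => rfl
  | cons a l ih => exact ih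

theorem omg_eq_zero {a b : Arr E} (h : b ≠ astar a) : omg k a b = 0 := by
  rcases a with e | e <;> rcases b with e' | e' <;> simp only [omg, ite_eq_right_iff]
  · rintro rfl; exact absurd rfl h
  · rintro rfl; exact absurd rfl h

end Sign

section Splits

variable {E : Type*}

theorem splits_fst_lt {w : CutWord E} {x : ℕ × Arr E × CutWord E × CutWord E}
    (h : x ∈ splits w) : x.1 < w.len := by
  induction w generalizing x with
  | nil => simp [splits] at h
  | arr b w ih =>
    obtain ⟨y, hy, rfl⟩ := List.mem_map.1 h
    have := ih hy
    simp only [len]; omega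
  | chord b m r ihm ihr =>
    simp only [splits, List.mem_cons, List.mem_append, List.mem_map] at h
    rcases h with rfl | ⟨y, hy, rfl⟩ | ⟨y, hy, rfl⟩
    · simp [len]
    · have := ihm hy; simp only [len]; omega
    · have := ihr hy; simp only [len]; omega

theorem nodup_splits (w : CutWord E) : (splits w).Nodup := by
  suffices h : (splits w).Pairwise fun x y => x.1 < y.1 from
    h.imp fun h e => by simp [e] at h
  induction w with
  | nil => simp [splits]
  | arr b w ih =>
    rw [splits, List.pairwise_map]
    exact ih.imp fun h => by simpa using h
  | chord b m r ihm ihr =>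
    simp only [splits, List.pairwise_cons, List.pairwise_append, List.pairwise_map,
      List.mem_append, List.mem_map]
    refine ⟨?_, ihm.imp fun h => by simpa using h, ihr.imp fun h => by simpa using h, ?_⟩
    · rintro _ (⟨y, hy, rfl⟩ | ⟨y, hy, rfl⟩) <;> simp
    · rintro _ ⟨y, hy, rfl⟩ _ ⟨z, hz, rfl⟩
      have := splits_fst_lt hy
      simp only; omega

theorem ins_of_mem_splits {w : CutWord E} {x : ℕ × Arr E × CutWord E × CutWord E}
    (h : x ∈ splits w) : ins x.2.1 x.2.2.1 x.2.2.2 x.1 = w ∧ x.1 ≤ x.2.2.2.len := by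
  induction w generalizing x with
  | nil => simp [splits] at h
  | arr b w ih =>
    obtain ⟨y, hy, rfl⟩ := List.mem_map.1 h
    have := ih hy
    simp only [ins, len, this.1, true_and]; omega
  | chord b m r ihm ihr =>
    simp only [splits, List.mem_cons, List.mem_append, List.mem_map] at h
    rcases h with rfl | ⟨y, hy, rfl⟩ | ⟨y, hy, rfl⟩
    · cases r <;> simp [ins]
    · have := ihm hy
      simp only [ins, len, this.2, if_true, this.1, true_and]; omega
    · have := ihr hy
      have h1 : ¬ y.1 + len m + 1 ≤ len m := by omega
      have h2 : y.1 + len m + 1 - (len m + 1) = y.1 := by omega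
      simp only [ins, len, h1, if_false, h2, this.1, true_and]; omega

theorem mem_splits_ins (a : Arr E) (m o : CutWord E) {i : ℕ} (hi : i ≤ o.len) :
    (i, a, m, o) ∈ splits (ins a m o i) := by
  induction o generalizing i with
  | nil =>
    obtain rfl : i = 0 := by simpa [len] using hi
    simp [ins, splits]
  | arr b w ih =>
    rcases i with _ | i
    · simp [ins, splits]
    · exact List.mem_map.2 ⟨_, ih (by simpa [len] using hi), rfl⟩
  | chord b x r ihx ihr =>
    rcases i with _ | i
    · simp [ins, splits]
    · simp only [ins]
      split_ifs with h
      · exact List.mem_cons_of_mem _ (List.mem_append_left _ (List.mem_map.2 ⟨_, ihx h, rfl⟩))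
      · refine List.mem_cons_of_mem _ (List.mem_append_right _ (List.mem_map.2
          ⟨_, ihr (i := i - (len x + 1)) (by simp only [len] at hi; omega), ?_⟩))
        simp only [Prod.mk.injEq, and_true]
        omega

theorem word_ins (a : Arr E) (m o : CutWord E) {i : ℕ} (hi : i ≤ o.len) :
    (ins a m o i).word =
      o.word.take i ++ a :: (m.word ++ astar a :: o.word.drop i) := by
  induction o generalizing i with
  | nil =>
    obtain rfl : i = 0 := by simpa [len] using hi
    simp [ins, word]
  | arr b w ih =>
    rcases i with _ | i
    · simp [ins, word]
    · simp [ins, word, ih (i := i) (by simpa [len] using hi)]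
  | chord b x r ihx ihr =>
    rcases i with _ | i
    · simp [ins, word]
    · simp only [ins]
      split_ifs with h
      · simp [word, ihx h, List.take_append_of_le_length, List.drop_append_of_le_length, h]
      · obtain ⟨q, rfl⟩ : ∃ q, i = x.len + (q + 1) := ⟨i - (x.len + 1), by omega⟩
        have e : x.len + (q + 1) - (x.len + 1) = q := by omega
        rw [e]
        have hq : q ≤ r.len := by simp only [len] at hi; omega
        simp [word, ihr hq, List.take_append, List.drop_append, List.take_of_length_le,
          List.drop_eq_nil_of_le]

theorem sgn_of_mem_splits (k : Type*) [CommRing k] {w : CutWord E}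
    {x : ℕ × Arr E × CutWord E × CutWord E} (h : x ∈ splits w) :
    w.sgn k = -(omg k x.2.1 (astar x.2.1)) * (x.2.2.1.sgn k * x.2.2.2.sgn k) := by
  induction w generalizing x with
  | nil => simp [splits] at h
  | arr b w ih =>
    obtain ⟨y, hy, rfl⟩ := List.mem_map.1 h
    have := ih hy
    exact this
  | chord b m r ihm ihr =>
    simp only [splits, List.mem_cons, List.mem_append, List.mem_map] at h
    rcases h with rfl | ⟨y, hy, rfl⟩ | ⟨y, hy, rfl⟩
    · rfl
    · simp only [sgn, ihm hy]; ring
    · simp only [sgn, ihr hy]; ring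

theorem lbl_of_mem_splits {w : CutWord E}
    {x : ℕ × Arr E × CutWord E × CutWord E} (h : x ∈ splits w) : x.2.2.2.lbl = w.lbl := by
  induction w generalizing x with
  | nil => simp [splits] at h
  | arr b w ih =>
    obtain ⟨y, hy, rfl⟩ := List.mem_map.1 h
    simp only [lbl, ih hy]
  | chord b m r ihm ihr =>
    simp only [splits, List.mem_cons, List.mem_append, List.mem_map] at h
    rcases h with rfl | ⟨y, hy, rfl⟩ | ⟨y, hy, rfl⟩
    · rfl
    · rfl
    · have := ihr hy
      exact this

variable {I : Type*} (s t : E → I)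

theorem cutsL_children (w : CutWord E) :
    DTree.cutsL (children s t w) =
      (splits w).map fun x => (tree s t (atgt s t x.2.1) x.2.2.1, children s t x.2.2.2) := by
  induction w with
  | nil => rfl
  | arr b w ih => simp only [children, ih, splits, List.map_map]; rfl
  | chord b m r ihm ihr =>
    simp only [children, DTree.cutsL, DTree.cuts, ihm, ihr, splits, List.map_map, List.map_cons,
      List.map_append, List.cons_append]
    congr 2
    refine List.map_congr_left fun x hx => ?_
    simp only [Function.comp_apply, children, lbl_of_mem_splits hx]

theorem cuts_tree (v : I) (w : CutWord E) :
    DTree.cuts (tree s t v w) =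
      (splits w).map fun x => (tree s t (atgt s t x.2.1) x.2.2.1, tree s t v x.2.2.2) := by
  rw [tree, DTree.cuts, cutsL_children, List.map_map]
  refine List.map_congr_left fun x hx => ?_
  simp only [Function.comp_apply, tree, lbl_of_mem_splits hx]

end Splits

end CutWord

/-- A list split at two positions `i < j`. -/
theorem eq_append_of_pair {α : Type*} {l : List α} {i j : ℕ} (hij : i < j) {a b : α}
    (hi : l[i]? = some a) (hj : l[j]? = some b) :
    l = l.take i ++ a :: ((l.drop (i + 1)).take (j - i - 1) ++ b :: l.drop (j + 1)) := by
  obtain ⟨hi', rfl⟩ := List.getElem?_eq_some_iff.1 hi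
  obtain ⟨hj', rfl⟩ := List.getElem?_eq_some_iff.1 hj
  have h : l[j] :: l.drop (j + 1) = (l.drop (i + 1)).drop (j - i - 1) := by
    rw [← List.drop_eq_getElem_cons, List.drop_drop]; congr 1; omega
  rw [h, List.take_append_drop, ← List.drop_eq_getElem_cons, List.take_append_drop]

section Eta

open CutWord

variable (k : Type*) [CommRing k] {I E : Type*} (s t : E → I)

theorem isPathFrom_append {v : I} {l l' : List (Arr E)} :
    IsPathFrom s t v (l ++ l') ↔ IsPathFrom s t v l ∧ IsPathFrom s t (pathTgt s t v l) l' := by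
  induction l generalizing v with
  | nil => simp [IsPathFrom, pathTgt]
  | cons a l ih => simp [IsPathFrom, pathTgt, ih, and_assoc]

theorem atgt_astar (a : Arr E) : atgt s t (astar a) = asrc s t a := by
  rcases a with e | e <;> rfl

/-- Deleting `a m a*` from a path leaves a path, and `m` is a path. -/
theorem isPathFrom_of_pair {v : I} {l m r : List (Arr E)} {a : Arr E}
    (h : IsPathFrom s t v (l ++ a :: (m ++ astar a :: r))) :
    IsPathFrom s t (atgt s t a) m ∧ IsPathFrom s t v (l ++ r) := by
  simp only [isPathFrom_append, IsPathFrom, atgt_astar] at h ⊢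
  obtain ⟨h1, h2, h3, -, h4⟩ := h
  exact ⟨h3, h1, h2 ▸ h4⟩

/-- `η_rt` written as a sum over cut words. -/
def etaSum (v : I) (l : List (Arr E)) : DMod k s t :=
  ∑ w ∈ cutWords l, w.sgn k • Finsupp.single (tree s t v w) (1 : k)

theorem etaRt_single (p : QPath s t) :
    etaRt k s t (Finsupp.single p 1) = etaSum k s t p.src p.arrows := by
  rw [etaRt, Finsupp.lift_apply, Finsupp.sum_single_index (by simp), one_smul, sum_allCuts]
  refine Finset.sum_congr rfl fun w hw => ?_
  rw [← mem_cutWords.1 hw, epsH_chords, dualTree_eq_tree]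

theorem etaRt_mkP {v : I} {l : List (Arr E)} (h : IsPathFrom s t v l) :
    etaRt k s t (mkP k s t v l) = etaSum k s t v l := by
  rw [mkP, dif_pos h, etaRt_single]

theorem mkQPD_of_isPathFrom {v : I} {l : List (Arr E)} (h : IsPathFrom s t v l) :
    mkQPD s t v l = ⟨v, l, h⟩ := dif_pos h

/-- The projection onto the span of the trees with a single vertex, identified with `P`. -/
def rootLabel : DMod k s t →ₗ[k] PathMod k s t :=
  Finsupp.lift (PathMod k s t) k (DTree s t) fun
    | .node x [] => Finsupp.single x 1
    | .node _ (_ :: _) => 0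

theorem eq_flat_of_children_eq_nil {w : CutWord E} (h : children s t w = []) :
    w = flat w.word := by
  induction w with
  | nil => rfl
  | arr a w ih => rw [word, flat, ← ih h]
  | chord a m r ihm ihr => simp [children] at h

theorem rootLabel_comp_etaRt : rootLabel k s t ∘ₗ etaRt k s t = LinearMap.id := by
  refine Finsupp.lhom_ext' fun p => LinearMap.ext_ring ?_
  have hs : ∀ T, rootLabel k s t (Finsupp.single T 1) = match T with
      | .node x [] => Finsupp.single x 1
      | .node _ (_ :: _) => 0 := fun T => by
    rw [rootLabel, Finsupp.lift_apply, Finsupp.sum_single_index (by simp), one_smul]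
  simp only [LinearMap.comp_apply, Finsupp.lsingle_apply, LinearMap.id_apply, etaRt_single,
    etaSum, map_sum, map_smul, hs]
  rw [Finset.sum_eq_single (flat p.arrows)]
  · have hc : children s t (flat p.arrows) = [] := by
      induction p.arrows with
      | nil => rfl
      | cons a l ih => exact ih
    simp only [tree, hc, sgn_flat, one_smul, lbl_flat, mkQPD_of_isPathFrom s t p.valid]
  · intro w hw hne
    rcases hc : children s t w with _ | ⟨c, cs⟩
    · exact absurd (mem_cutWords.1 hw ▸ eq_flat_of_children_eq_nil s t hc) hne
    · simp only [tree, hc, smul_zero]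
  · intro h
    exact absurd (mem_cutWords.2 (word_flat _)) h

theorem rhoD_tree (v : I) (w : CutWord E) :
    rhoD k s t (Finsupp.single (tree s t v w) 1) =
      ∑ x ∈ (splits w).toFinset,
        Finsupp.single (tree s t (atgt s t x.2.1) x.2.2.1) (1 : k) ⊗ₜ[k]
          Finsupp.single (tree s t v x.2.2.2) (1 : k) := by
  rw [rhoD, Finsupp.lift_apply, Finsupp.sum_single_index (by simp), one_smul,
    List.sum_toFinset _ (nodup_splits w), cuts_tree, List.map_map]
  rfl

/-- The image of a summand of `δ_{p,rt}` under `η_rt ⊗ η_rt`. -/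
theorem map_etaRt_dpTerm (p : QPath s t) {i j : ℕ} (hij : i < j) :
    TensorProduct.map (etaRt k s t) (etaRt k s t) (dpTerm k s t p i j) =
      ∑ a ∈ (p.arrows[i]?).toFinset.filter fun a => p.arrows[j]? = some (astar a),
        ∑ m ∈ cutWords ((p.arrows.drop (i + 1)).take (j - i - 1)),
          ∑ o ∈ cutWords (p.arrows.take i ++ p.arrows.drop (j + 1)),
            (-(omg k a (astar a)) * (m.sgn k * o.sgn k)) •
              (Finsupp.single (tree s t (atgt s t a) m) (1 : k) ⊗ₜ[k]
                Finsupp.single (tree s t p.src o) (1 : k)) := by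
  rw [dpTerm]
  rcases hi : p.arrows[i]? with _ | a
  · simp
  rcases hj : p.arrows[j]? with _ | b
  · simp
  by_cases hb : b = astar a
  · subst hb
    have hdec := eq_append_of_pair hij hi hj
    have hp := p.valid
    rw [hdec] at hp
    obtain ⟨hm, ho⟩ := isPathFrom_of_pair s t hp
    have hs : (some a).toFinset.filter (fun a' => some (astar a) = some (astar a')) = {a} := by
      ext a'
      simp only [Finset.mem_filter, Option.mem_toFinset, Option.mem_def, Option.some.injEq,
        Finset.mem_singleton]
      exact ⟨fun h => h.1.symm, fun h => by simp [h]⟩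
    rw [hs, Finset.sum_singleton]
    simp only [map_smul, TensorProduct.map_tmul, etaRt_mkP k s t hm, etaRt_mkP k s t ho]
    simp only [etaSum, TensorProduct.sum_tmul, TensorProduct.tmul_sum, Finset.smul_sum,
      TensorProduct.smul_tmul_smul, smul_smul]
    rw [Finset.sum_comm]
  · rw [Finset.filter_eq_empty_iff.2, Finset.sum_empty]
    · simp [omg_eq_zero k hb]
    · intro a' ha'
      simp only [Option.mem_toFinset, Option.mem_def, Option.some.injEq] at ha'
      subst ha'
      simpa using hb

end Eta

section Hom

open CutWord

variable {E : Type*}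

/-- Choosing a chord of a cut word on `l` amounts to choosing the two ends of the chord in `l`
and cut words on the inner and outer remaining words. -/
theorem sum_splits_cutWords {M : Type*} [AddCommMonoid M] (l : List (Arr E))
    (f : Arr E → CutWord E → CutWord E → M) :
    ∑ w ∈ cutWords l, ∑ x ∈ (splits w).toFinset, f x.2.1 x.2.2.1 x.2.2.2 =
      ∑ i ∈ Finset.range l.length, ∑ j ∈ (Finset.range l.length).filter fun j => i < j,
        ∑ a ∈ (l[i]?).toFinset.filter fun a => l[j]? = some (astar a),
          ∑ m ∈ cutWords ((l.drop (i + 1)).take (j - i - 1)),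
            ∑ o ∈ cutWords (l.take i ++ l.drop (j + 1)), f a m o := by
  simp only [Finset.sum_sigma']
  refine Finset.sum_bij'
    (fun y _ => ⟨y.2.1, y.2.1 + y.2.2.2.1.len + 1, y.2.2.1, y.2.2.2.1, y.2.2.2.2⟩)
    (fun z _ => ⟨ins z.2.2.1 z.2.2.2.1 z.2.2.2.2 z.1, z.1, z.2.2.1, z.2.2.2.1, z.2.2.2.2⟩)
    ?_ ?_ ?_ ?_ (fun _ _ => rfl)
  · rintro ⟨w, i, a, m, o⟩ h
    simp only [Finset.mem_sigma, mem_cutWords, List.mem_toFinset] at h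
    obtain ⟨rfl, h⟩ := h
    obtain ⟨h1, h2⟩ := ins_of_mem_splits h
    simp only at h1 h2
    obtain rfl := h1
    simp only [Finset.mem_sigma, mem_cutWords, Finset.mem_range, Finset.mem_filter,
      Option.mem_toFinset, Option.mem_def, word_ins a m o h2]
    have hl : (o.word.take i).length = i := by simpa using h2
    have hlen : (o.word.take i ++ a :: (m.word ++ astar a :: o.word.drop i)).length =
        o.len + m.len + 2 := by
      simp; omega
    refine ⟨by omega, ⟨by omega, by omega⟩, ⟨?_, ?_⟩, ?_, ?_⟩
    · rw [List.getElem?_append_right (by omega), hl]; simp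
    · rw [List.getElem?_append_right (by omega), hl]
      have e : i + m.len + 1 - i = m.word.length + 1 := by simp; omega
      rw [e, List.getElem?_cons_succ, List.getElem?_append_right le_rfl]; simp
    · have e : i + m.len + 1 - i - 1 = m.word.length := by simp; omega
      rw [e, List.drop_append, hl, List.drop_eq_nil_of_le (by omega), Nat.add_sub_cancel_left]
      simp
    · have e : i + m.len + 1 + 1 = i + (m.word.length + 1 + 1) := by simp; omega
      rw [e, List.take_append_of_le_length (by omega), List.take_of_length_le (by omega),
        List.drop_append, hl, List.drop_eq_nil_of_le (by omega), Nat.add_sub_cancel_left,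
        List.drop_succ_cons, List.drop_append, List.drop_eq_nil_of_le (by omega)]
      simp
  · rintro ⟨i, j, a, m, o⟩ h
    simp only [Finset.mem_sigma, mem_cutWords, Finset.mem_range, Finset.mem_filter,
      Option.mem_toFinset, Option.mem_def] at h
    obtain ⟨hi', ⟨hj', hij⟩, ⟨hi, hj⟩, hm, ho⟩ := h
    have hio : i ≤ o.len := by
      rw [← length_word, ho]; simp; omega
    simp only [Finset.mem_sigma, mem_cutWords, List.mem_toFinset]
    refine ⟨?_, mem_splits_ins a m o hio⟩
    have hl : (l.take i).length = i := by simp; omega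
    rw [word_ins a m o hio, hm, ho, List.take_left' hl, List.drop_left' hl,
      ← eq_append_of_pair hij hi hj]
  · rintro ⟨w, i, a, m, o⟩ h
    simp only [Finset.mem_sigma, mem_cutWords, List.mem_toFinset] at h
    simp only [(ins_of_mem_splits h.2).1]
  · rintro ⟨i, j, a, m, o⟩ h
    simp only [Finset.mem_sigma, mem_cutWords, Finset.mem_range, Finset.mem_filter,
      Option.mem_toFinset, Option.mem_def] at h
    obtain ⟨hi', ⟨hj', hij⟩, ⟨hi, hj⟩, hm, ho⟩ := h
    have : m.len = j - i - 1 := by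
      rw [← length_word, hm]; simp; omega
    obtain rfl : i + m.len + 1 = j := by omega
    rfl

end Hom

/-- `η_rt` is an injective homomorphism of pre-Lie coalgebras
`(P, δ_{p,rt}) → (T_rt(Φ_rt), ρ)`. -/
theorem etaRt_injective_preLie_hom :
    Function.Injective (etaRt k s t) ∧
    TensorProduct.map (etaRt k s t) (etaRt k s t) ∘ₗ deltaPrt k s t =
      rhoD k s t ∘ₗ etaRt k s t := by
  refine ⟨Function.LeftInverse.injective (g := rootLabel k s t)
    (LinearMap.congr_fun (rootLabel_comp_etaRt k s t)), ?_⟩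
  refine Finsupp.lhom_ext' fun p => LinearMap.ext_ring ?_
  simp only [LinearMap.comp_apply, Finsupp.lsingle_apply, etaRt_single, etaSum, map_sum, map_smul,
    rhoD_tree, Finset.smul_sum]
  rw [deltaPrt, Finsupp.lift_apply, Finsupp.sum_single_index (by simp), one_smul]
  simp only [zero_smul, ← Finset.sum_filter, map_sum]
  trans ∑ w ∈ CutWord.cutWords p.arrows, ∑ x ∈ (CutWord.splits w).toFinset,
    (-(omg k x.2.1 (astar x.2.1)) * (x.2.2.1.sgn k * x.2.2.2.sgn k)) •
      (Finsupp.single (CutWord.tree s t (atgt s t x.2.1) x.2.2.1) (1 : k) ⊗ₜ[k]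
        Finsupp.single (CutWord.tree s t p.src x.2.2.2) (1 : k))
  · rw [sum_splits_cutWords p.arrows fun a m o =>
      (-(omg k a (astar a)) * (m.sgn k * o.sgn k)) •
        (Finsupp.single (CutWord.tree s t (atgt s t a) m) (1 : k) ⊗ₜ[k]
          Finsupp.single (CutWord.tree s t p.src o) (1 : k))]
    refine Finset.sum_congr rfl fun i _ => Finset.sum_congr rfl fun j hj => ?_
    exact map_etaRt_dpTerm k s t p (Finset.mem_filter.1 hj).2
  · refine Finset.sum_congr rfl fun w _ => Finset.sum_congr rfl fun x hx => ?_
    rw [CutWord.sgn_of_mem_splits k (List.mem_toFinset.1 hx)]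

end
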